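/- Let G be a finite group of odd order and let ρ : G → GL(ℤⁿ) be an action of G on ℤⁿ = (Fin n → ℤ) by ℤ-linear automorphisms each of which preserves the standard bilinear form ⟨x,y⟩ = ∑ᵢ xᵢ·yᵢ. Then there exist signs ε : Fin n → {±1} such that G permutes the basis {ε(i)·eᵢ : i ∈ Fin n}; that is, for every g ∈ G and every i there exists j with ρ(g)(ε(i)·eᵢ) = ε(j)·e_j. Consequently ℤⁿ is a direct sum of permutation modules ℤ[G/H_α] for suitable subgroups H_α ⊆ G. -/

import Mathlib

/-- The integer vectors of norm one are the standard basis vectors up to sign. -/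
theorem exists_eq_smul_single_of_sum_mul_self_eq_one {ι : Type*} [Fintype ι] [DecidableEq ι]
    {v : ι → ℤ} (hv : ∑ i, v i * v i = 1) :
    ∃ (j : ι) (u : ℤˣ), v = u • Pi.single j 1 := by
  obtain ⟨j, -, hj⟩ : ∃ j ∈ Finset.univ, v j * v j ≠ 0 :=
    Finset.exists_ne_zero_of_sum_ne_zero (by rw [hv]; exact one_ne_zero)
  have hpos : 0 < v j * v j := lt_of_le_of_ne (mul_self_nonneg _) hj.symm
  rw [← Finset.add_sum_erase _ _ (Finset.mem_univ j)] at hv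
  have hrest : 0 ≤ ∑ i ∈ Finset.univ.erase j, v i * v i :=
    Finset.sum_nonneg fun i _ => mul_self_nonneg _
  have hzero : ∑ i ∈ Finset.univ.erase j, v i * v i = 0 := by lia
  have hunit : v j * v j = 1 := by linarith
  rw [Finset.sum_eq_zero_iff_of_nonneg fun i _ => mul_self_nonneg _] at hzero
  refine ⟨j, ⟨v j, v j, hunit, hunit⟩, funext fun i => ?_⟩
  by_cases hij : i = j
  · subst hij
    simp [Units.smul_def]
  · have := hzero i (by simp [hij])
    simpa [Units.smul_def, hij] using this

/-- A linear action of a group of odd order sends no nonzero vector to its negative. -/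
theorem eq_zero_of_map_eq_neg_of_odd_card {R M G : Type*} [Semiring R] [AddCommGroup M]
    [Module R M] [IsAddTorsionFree M] [Group G] (hodd : Odd (Nat.card G))
    (ρ : G →* (M ≃ₗ[R] M)) {g : G} {v : M} (h : ρ g v = -v) : v = 0 := by
  have hpow : ∀ k : ℕ, ρ (g ^ (2 * k + 1)) v = -v := by
    intro k
    induction k with
    | zero => simpa using h
    | succ k ih =>
      rw [show 2 * (k + 1) + 1 = 1 + 1 + (2 * k + 1) by ring, pow_add, pow_add, pow_one, map_mul,
        map_mul, LinearEquiv.mul_apply, ih, LinearEquiv.mul_apply, map_neg, h, neg_neg, h]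
  obtain ⟨k, hk⟩ := hodd
  have hfix := hpow k
  rw [← hk, pow_card_eq_one', map_one, LinearEquiv.coe_one, id_eq] at hfix
  exact self_eq_neg.mp hfix

/-- If a finite group of odd order acts on `ℤⁿ` by automorphisms preserving the
standard bilinear form, then after changing signs of the standard basis vectors,
the group permutes the resulting basis `{ε(i) • eᵢ}`. -/
theorem odd_group_form_preserving_action_permutes_signed_basis
    (n : ℕ) (G : Type*) [Group G] [Finite G] (hodd : Odd (Nat.card G))
    (ρ : G →* ((Fin n → ℤ) ≃ₗ[ℤ] (Fin n → ℤ)))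
    (hform : ∀ (g : G) (x y : Fin n → ℤ),
      ∑ i, ρ g x i * ρ g y i = ∑ i, x i * y i) :
    ∃ ε : Fin n → ℤ, (∀ i, ε i = 1 ∨ ε i = -1) ∧
      ∀ (g : G) (i : Fin n), ∃ j : Fin n,
        ρ g (ε i • Pi.single i 1) = ε j • Pi.single j 1 := by
  let e : Fin n → Fin n → ℤ := fun i => Pi.single i 1
  have hsmul (g : G) (u : ℤˣ) (x : Fin n → ℤ) : ρ g (u • x) = u • ρ g x := by
    simp only [Units.smul_def, map_smul]
  have hinv {g : G} {x y : Fin n → ℤ} (h : ρ g x = y) : ρ g⁻¹ y = x := by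
    rw [← h, ← LinearEquiv.mul_apply, ← map_mul, inv_mul_cancel, map_one, LinearEquiv.coe_one,
      id_eq]
  have hsigned (g : G) (i : Fin n) : ∃ (j : Fin n) (u : ℤˣ), ρ g (e i) = u • e j :=
    exists_eq_smul_single_of_sum_mul_self_eq_one (by rw [hform]; simp [e, Pi.single_apply])
  have hsign {g h : G} {i j : Fin n} {u w : ℤˣ} (hg : ρ g (e i) = u • e j)
      (hh : ρ h (e i) = w • e j) : u = w := by
    by_contra hne
    have hneg : ρ h (e i) = -ρ g (e i) := by
      rw [hg, hh, Int.units_ne_iff_eq_neg.mp hne, Units.neg_smul, neg_neg]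
    have hzero : e i = 0 := eq_zero_of_map_eq_neg_of_odd_card hodd ρ (g := g⁻¹ * h) <| by
      rw [map_mul, LinearEquiv.mul_apply, hneg, map_neg, hinv rfl]
    simpa [e] using congrFun hzero i
  let s : Setoid (Fin n) :=
    { r := fun i j => ∃ (g : G) (u : ℤˣ), ρ g (e i) = u • e j
      iseqv :=
        { refl := fun i => ⟨1, 1, by simp⟩
          symm := by
            rintro i j ⟨g, u, h⟩
            refine ⟨g⁻¹, u⁻¹, ?_⟩
            rw [eq_inv_smul_iff, ← hsmul, hinv h]
          trans := by
            rintro i j k ⟨g, u, h⟩ ⟨g', u', h'⟩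
            refine ⟨g' * g, u * u', ?_⟩
            rw [map_mul, LinearEquiv.mul_apply, h, hsmul, h', mul_smul] } }
  have hrep (i : Fin n) : ∃ (g : G) (u : ℤˣ), ρ g (e (Quotient.mk s i).out) = u • e i :=
    Quotient.mk_out i
  choose t ε ht using hrep
  refine ⟨fun i => ε i, fun i => (Int.units_eq_one_or (ε i)).imp (by simp +contextual)
    (by simp +contextual), fun g i => ?_⟩
  obtain ⟨j, u, hj⟩ := hsigned g i
  have hclass : Quotient.mk s i = Quotient.mk s j := Quotient.sound ⟨g, u, hj⟩
  have hmove : ρ (g * t i) (e (Quotient.mk s j).out) = (ε i * u) • e j := by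
    rw [← hclass, map_mul, LinearEquiv.mul_apply, ht, hsmul, hj, mul_smul]
  refine ⟨j, ?_⟩
  change ρ g (ε i • e i) = ε j • e j
  rw [hsmul, hj, ← mul_smul, hsign hmove (ht j)]
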